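/- Let K be a commutative ℚ-algebra, let n ≥ 1 and k ≥ 0 be integers, and let x_1, …, x_n ∈ K with S = x_1 + ⋯ + x_n. Then the sum over all tuples (α_1, …, α_n) of non-negative integers with α_1 + ⋯ + α_n = k of the products ∏_{i=1}^n [x_i(x_i+1)⋯(x_i+α_i−1)/α_i!] equals S(S+1)⋯(S+k−1)/k!. (Here an empty product x_i(x_i+1)⋯(x_i+α_i−1) with α_i = 0 is 1.) -/

import Mathlib

/-! The series `F x = ∑ₖ x(x+1)⋯(x+k-1)/k! Tᵏ`, formally `(1 - T)^(-x)`, is the unique power series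
with constant coefficient `1` satisfying the differential equation `(1 - T) F' = x F`
(`eq_risingSeries`). By the product rule `F x * F y` satisfies the equation for `x + y`, hence
`F (x + y) = F x * F y`, and so `F (∑ i, x i) = ∏ i, F (x i)` (`risingSeries_sum`). The theorem
compares the coefficients of `Tᵏ` on both sides. -/

open Finset Polynomial

section RisingSeries

variable {K : Type*} [CommRing K] [Algebra ℚ K]

/-- The generating series `∑ₖ x(x+1)⋯(x+k-1)/k! Tᵏ`, that is, the formal expansion of
`(1 - T)^(-x)`. -/
noncomputable def risingSeries (x : K) : PowerSeries K :=
  PowerSeries.mk fun k =>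
    algebraMap ℚ K (1 / (Nat.factorial k : ℚ)) * (ascPochhammer K k).eval x

lemma constantCoeff_risingSeries (x : K) :
    PowerSeries.constantCoeff (risingSeries x) = 1 := by
  rw [← PowerSeries.coeff_zero_eq_constantCoeff_apply]
  simp [risingSeries]

lemma coeff_risingSeries_succ (x : K) (k : ℕ) :
    PowerSeries.coeff (k + 1) (risingSeries x) * ((k : K) + 1) =
      (x + k) * PowerSeries.coeff k (risingSeries x) := by
  have h : algebraMap ℚ K (1 / (Nat.factorial (k + 1) : ℚ)) * ((k : K) + 1) =
      algebraMap ℚ K (1 / (Nat.factorial k : ℚ)) := by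
    have hk : ((k : K) + 1) = algebraMap ℚ K ((k : ℚ) + 1) := by simp
    rw [hk, ← map_mul, Nat.factorial_succ]
    congr 1
    have h₁ : (Nat.factorial k : ℚ) ≠ 0 := by positivity
    have h₂ : (k : ℚ) + 1 ≠ 0 := by positivity
    push_cast
    field_simp
  simp only [risingSeries, PowerSeries.coeff_mk, ascPochhammer_succ_eval]
  rw [← h]
  ring

/-- The coefficientwise form of the differential equation `(1 - T) f' = x f`. -/
lemma derivative_eq_iff (f : PowerSeries K) (x : K) :
    (1 - PowerSeries.X) * PowerSeries.derivative K f = PowerSeries.C x * f ↔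
      ∀ k : ℕ, PowerSeries.coeff (k + 1) f * ((k : K) + 1) =
        (x + k) * PowerSeries.coeff k f := by
  rw [PowerSeries.ext_iff]
  refine forall_congr' fun k => ?_
  have hX : PowerSeries.coeff k (PowerSeries.X * PowerSeries.derivative K f) =
      k * PowerSeries.coeff k f := by
    cases k with
    | zero => simp
    | succ k =>
      rw [PowerSeries.coeff_succ_X_mul, PowerSeries.coeff_derivative]
      push_cast
      ring
  rw [sub_mul, one_mul, map_sub, hX, PowerSeries.coeff_derivative, PowerSeries.coeff_C_mul,
    sub_eq_iff_eq_add, add_mul]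

lemma derivative_risingSeries (x : K) :
    (1 - PowerSeries.X) * PowerSeries.derivative K (risingSeries x) =
      PowerSeries.C x * risingSeries x :=
  (derivative_eq_iff _ _).2 (coeff_risingSeries_succ x)

lemma eq_risingSeries {f : PowerSeries K} {x : K} (h₀ : PowerSeries.constantCoeff f = 1)
    (h : (1 - PowerSeries.X) * PowerSeries.derivative K f = PowerSeries.C x * f) :
    f = risingSeries x := by
  rw [derivative_eq_iff] at h
  ext k
  induction k with
  | zero =>
    simp only [PowerSeries.coeff_zero_eq_constantCoeff_apply, h₀, constantCoeff_risingSeries]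
  | succ k ih =>
    have hu : IsUnit ((k : K) + 1) := by
      have h₁ : IsUnit ((k : ℚ) + 1) := IsUnit.mk0 _ (by positivity)
      simpa using h₁.map (algebraMap ℚ K)
    apply hu.mul_right_cancel
    rw [h, coeff_risingSeries_succ, ih]

lemma risingSeries_zero : risingSeries (0 : K) = 1 := by
  refine (eq_risingSeries (by simp) ?_).symm
  simp

lemma risingSeries_add (x y : K) :
    risingSeries (x + y) = risingSeries x * risingSeries y := by
  refine (eq_risingSeries ?_ ?_).symm
  · simp [constantCoeff_risingSeries]
  · rw [Derivation.leibniz, smul_eq_mul, smul_eq_mul, map_add]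
    linear_combination risingSeries x * derivative_risingSeries y +
      risingSeries y * derivative_risingSeries x

lemma risingSeries_sum {ι : Type*} (s : Finset ι) (x : ι → K) :
    risingSeries (∑ i ∈ s, x i) = ∏ i ∈ s, risingSeries (x i) := by
  classical
  induction s using Finset.induction_on with
  | empty => simp [risingSeries_zero]
  | insert a s ha ih => rw [sum_insert ha, prod_insert ha, risingSeries_add, ih]

end RisingSeries

/-- Lemma `lemmapoly`: in a commutative `ℚ`-algebra `K`, for `n ≥ 1`,
`k ≥ 0` and `x_1, …, x_n ∈ K` with `S = x_1 + ⋯ + x_n`, the sum over all tuples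
`(α_1, …, α_n)` of non-negative integers with `α_1 + ⋯ + α_n = k` of
`∏_i x_i(x_i+1)⋯(x_i+α_i−1)/α_i!` equals `S(S+1)⋯(S+k−1)/k!`. -/
theorem stmt0 (K : Type*) [CommRing K] [Algebra ℚ K] (n k : ℕ) (hn : 1 ≤ n)
    (x : Fin n → K) :
    ∑ α ∈ Finset.Nat.antidiagonalTuple n k,
      ∏ i : Fin n,
        algebraMap ℚ K (1 / (Nat.factorial (α i) : ℚ)) *
          (ascPochhammer K (α i)).eval (x i)
    = algebraMap ℚ K (1 / (Nat.factorial k : ℚ)) *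
        (ascPochhammer K k).eval (∑ i : Fin n, x i) := by
  have h := congrArg (PowerSeries.coeff k) (risingSeries_sum univ x)
  rw [PowerSeries.coeff_prod] at h
  simp only [risingSeries, PowerSeries.coeff_mk] at h
  rw [h]
  -- Finitely supported functions on `Fin n` with sum `k` are the same as tuples with sum `k`.
  refine sum_equiv Finsupp.equivFunOnFinite.symm (fun α => ?_) (fun α _ => ?_)
  · simp [Finset.Nat.mem_antidiagonalTuple, mem_finsuppAntidiag]
  · simp
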